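/- arXiv:1008.4627 — 5 statements merged into one kernel-verified Lean document; each statement's English description precedes it below -/
import Mathlib

section
/- For every database instance D : T → A → U and every finite set M of matching dependencies (with symmetric similarity relations subsuming equality), there exists an instance D' : T → A → U such that (D,D') ⊨ M. -/
/-- A matching dependency: a finite set `L` of attribute pairs (the similarity
condition to the left of the arrow) and a finite set `R` of attribute pairs
(the pairs of attributes to be matched, to the right of the arrow). -/
structure MD (A : Type*) where
  L : Finset (A × A)
  R : Finset (A × A)

/-- `simPairs sim L D t₁ t₂` : the tuples `t₁, t₂` of instance `D` satisfy the
similarity condition given by the attribute pairs in `L`. -/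
def simPairs {T A U : Type*} (sim : A → A → U → U → Prop)
    (L : Finset (A × A)) (D : T → A → U) (t₁ t₂ : T) : Prop :=
  ∀ p ∈ L, sim p.1 p.2 (D t₁ p.1) (D t₂ p.2)

/-- `Modifiable sim M D t c` : the value of attribute `c` of tuple `t` is
modifiable in instance `D` with respect to the set `M` of MDs (least such predicate). -/
inductive Modifiable {T A U : Type*} (sim : A → A → U → U → Prop)
    (M : Finset (MD A)) (D : T → A → U) : T → A → Prop where
  | left_ne {m : MD A} {t s : T} {c e : A} :
      m ∈ M → (c, e) ∈ m.R → simPairs sim m.L D t s →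
      D t c ≠ D s e → Modifiable sim M D t c
  | left_mod {m : MD A} {t s : T} {c e : A} :
      m ∈ M → (c, e) ∈ m.R → simPairs sim m.L D t s →
      Modifiable sim M D s e → Modifiable sim M D t c
  | right_ne {m : MD A} {t s : T} {c e : A} :
      m ∈ M → (e, c) ∈ m.R → simPairs sim m.L D s t →
      D s e ≠ D t c → Modifiable sim M D t c
  | right_mod {m : MD A} {t s : T} {c e : A} :
      m ∈ M → (e, c) ∈ m.R → simPairs sim m.L D s t →
      Modifiable sim M D s e → Modifiable sim M D t c

/-- `(D, D') ⊨ M`. -/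
def Sat {T A U : Type*} (sim : A → A → U → U → Prop)
    (M : Finset (MD A)) (D D' : T → A → U) : Prop :=
  (∀ m ∈ M, ∀ t₁ t₂ : T, simPairs sim m.L D t₁ t₂ →
      ∀ p ∈ m.R, D' t₁ p.1 = D' t₂ p.2) ∧
  (∀ (t : T) (g : A), ¬ Modifiable sim M D t g → D' t g = D t g)

/-- `D'` is a resolved instance of `D` wrt `M`: there is a finite (possibly empty)
chain of instances `D₁, …, Dₙ` with `(D,D₁) ⊨ M`, `(Dᵢ,Dᵢ₊₁) ⊨ M`, `(Dₙ,D') ⊨ M`,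
and `(D',D') ⊨ M`. -/
def ResolvedInstance {T A U : Type*} (sim : A → A → U → U → Prop)
    (M : Finset (MD A)) (D D' : T → A → U) : Prop :=
  ∃ L : List (T → A → U), List.Chain (Sat sim M) D (L ++ [D']) ∧ Sat sim M D' D'

/-- Number of changed values in going from `D` to `D'`. -/
noncomputable def numChanges {T A U : Type*} (D D' : T → A → U) : ℕ :=
  Nat.card {p : T × A // D p.1 p.2 ≠ D' p.1 p.2}

/-- `D'` is a minimally resolved instance (MRI) of `D` wrt `M`. -/
def IsMRI {T A U : Type*} (sim : A → A → U → U → Prop)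
    (M : Finset (MD A)) (D D' : T → A → U) : Prop :=
  ResolvedInstance sim M D D' ∧
  ∀ D'' : T → A → U, ResolvedInstance sim M D D'' →
    numChanges D D' ≤ numChanges D D''

/-- The edge relation of the similarity graph `G_D` on the vertex set `T × A`. -/
def SimEdge {T A U : Type*} (sim : A → A → U → U → Prop)
    (M : Finset (MD A)) (D : T → A → U) (p q : T × A) : Prop :=
  ∃ m ∈ M, (simPairs sim m.L D p.1 q.1 ∧ (p.2, q.2) ∈ m.R) ∨
           (simPairs sim m.L D q.1 p.1 ∧ (q.2, p.2) ∈ m.R)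

/-!
Modifiability propagates in both directions along matched positions, so two positions that a
matching dependency requires to agree are either both modifiable or both not. Overwriting every
modifiable position with one fixed value `u` makes the former agree; the latter agree already in
`D`, since a disagreement would have made them modifiable.
-/

section

variable {T A U : Type*} {sim : A → A → U → U → Prop} {M : Finset (MD A)} {D : T → A → U}
  {m : MD A} {t s : T} {c e : A} {u : U}

theorem modifiable_iff_of_simPairs (hm : m ∈ M) (hR : (c, e) ∈ m.R)
    (hsim : simPairs sim m.L D t s) : Modifiable sim M D t c ↔ Modifiable sim M D s e :=
  ⟨.right_mod hm hR hsim, .left_mod hm hR hsim⟩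

theorem eq_of_simPairs_of_not_modifiable (hm : m ∈ M) (hR : (c, e) ∈ m.R)
    (hsim : simPairs sim m.L D t s) (hmod : ¬ Modifiable sim M D t c) : D t c = D s e :=
  not_not.mp fun hne => hmod (.left_ne hm hR hsim hne)

open Classical in
/-- The update of `D` that sets every modifiable position to `u`. A single value can serve all
positions because all attributes share the value type `U`. -/
noncomputable def overwriteModifiable (sim : A → A → U → U → Prop) (M : Finset (MD A))
    (D : T → A → U) (u : U) (t : T) (c : A) : U :=
  if Modifiable sim M D t c then u else D t c

theorem overwriteModifiable_of_modifiable (h : Modifiable sim M D t c) :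
    overwriteModifiable sim M D u t c = u :=
  if_pos h

theorem overwriteModifiable_of_not_modifiable (h : ¬ Modifiable sim M D t c) :
    overwriteModifiable sim M D u t c = D t c :=
  if_neg h

theorem overwriteModifiable_eq_of_simPairs (hm : m ∈ M) (hR : (c, e) ∈ m.R)
    (hsim : simPairs sim m.L D t s) :
    overwriteModifiable sim M D u t c = overwriteModifiable sim M D u s e := by
  have hiff : Modifiable sim M D t c ↔ Modifiable sim M D s e :=
    modifiable_iff_of_simPairs hm hR hsim
  by_cases hmod : Modifiable sim M D t c
  · rw [overwriteModifiable_of_modifiable hmod, overwriteModifiable_of_modifiable (hiff.mp hmod)]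
  · rw [overwriteModifiable_of_not_modifiable hmod,
      overwriteModifiable_of_not_modifiable (mt hiff.mpr hmod)]
    exact eq_of_simPairs_of_not_modifiable hm hR hsim hmod

theorem sat_overwriteModifiable (sim : A → A → U → U → Prop) (M : Finset (MD A))
    (D : T → A → U) (u : U) : Sat sim M D (overwriteModifiable sim M D u) :=
  ⟨fun _ hm _ _ hsim _ hR => overwriteModifiable_eq_of_simPairs hm hR hsim,
    fun _ _ => overwriteModifiable_of_not_modifiable⟩

theorem exists_satisfying_update_general (sim : A → A → U → U → Prop) (M : Finset (MD A))
    (D : T → A → U) : ∃ D' : T → A → U, Sat sim M D D' := by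
  rcases isEmpty_or_nonempty U with _ | ⟨⟨u⟩⟩
  · exact ⟨D, fun _ _ _ _ _ _ _ => Subsingleton.elim _ _, fun _ _ _ => rfl⟩
  · exact ⟨overwriteModifiable sim M D u, sat_overwriteModifiable sim M D u⟩

end

/-- Theorem 3.1 (first part): for every instance `D` and finite set `M` of MDs,
there exists an instance `D'` with `(D, D') ⊨ M`. -/
theorem exists_satisfying_update {T A U : Type*} [Fintype T] [Fintype A]
    (sim : A → A → U → U → Prop)
    (hsym : ∀ (a b : A) (x y : U), sim a b x y → sim b a y x)
    (hsub : ∀ (a b : A) (x y : U), x = y → sim a b x y)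
    (M : Finset (MD A)) (D : T → A → U) :
    ∃ D' : T → A → U, Sat sim M D D' :=
  exists_satisfying_update_general sim M D
end

section
/- If (D,D') ⊨ M and the vertices (t₁,a) and (t₂,b) lie in the same connected component of the similarity graph G_D, then D' t₁ a = D' t₂ b. In particular, all values of D' on a connected component of G_D are equal to a common value. -/
/-- `D'` enforces the matches that `M` demands on `D`: clause (1) of `(D, D') ⊨ M`, without the
clause that freezes the unmodifiable values. -/
def Enforces {T A U : Type*} (sim : A → A → U → U → Prop)
    (M : Finset (MD A)) (D D' : T → A → U) : Prop :=
  ∀ m ∈ M, ∀ t₁ t₂ : T, simPairs sim m.L D t₁ t₂ → ∀ p ∈ m.R, D' t₁ p.1 = D' t₂ p.2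

section

variable {T A U : Type*} {sim : A → A → U → U → Prop} {M : Finset (MD A)} {D D' : T → A → U}

theorem Sat.enforces (hsat : Sat sim M D D') : Enforces sim M D D' :=
  hsat.1

theorem Enforces.eq_of_simEdge (henf : Enforces sim M D D') {p q : T × A}
    (hpq : SimEdge sim M D p q) : D' p.1 p.2 = D' q.1 q.2 := by
  obtain ⟨m, hm, ⟨hsim, hR⟩ | ⟨hsim, hR⟩⟩ := hpq
  · exact henf m hm p.1 q.1 hsim (p.2, q.2) hR
  · exact (henf m hm q.1 p.1 hsim (q.2, p.2) hR).symm

theorem sat_constant_on_components_general (henf : Enforces sim M D D') {p q : T × A}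
    (hconn : Relation.EqvGen (SimEdge sim M D) p q) : D' p.1 p.2 = D' q.1 q.2 :=
  Setoid.eqvGen_le (s := Setoid.ker fun v : T × A ↦ D' v.1 v.2)
    (fun _ _ hedge ↦ henf.eq_of_simEdge hedge) hconn

end

/-- If `(D, D') ⊨ M` then `D'` takes a common value on every connected
component of the similarity graph `G_D`. -/
theorem sat_constant_on_components {T A U : Type*} [Fintype T] [Fintype A]
    (sim : A → A → U → U → Prop)
    (hsym : ∀ (a b : A) (x y : U), sim a b x y → sim b a y x)
    (hsub : ∀ (a b : A) (x y : U), x = y → sim a b x y)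
    (M : Finset (MD A)) (D D' : T → A → U)
    (hsat : Sat sim M D D')
    (t₁ t₂ : T) (a b : A)
    (hconn : Relation.EqvGen (SimEdge sim M D) (t₁, a) (t₂, b)) :
    D' t₁ a = D' t₂ b :=
  sat_constant_on_components_general hsat.enforces hconn
end

section
/- Call a connected component of the similarity graph G_D broken if it contains two adjacent vertices (s,a) and (t,b) with D s a ≠ D t b. For every function v assigning an arbitrary value of U to each broken component, the instance D' defined by D' t a = v(C) whenever the component C containing (t,a) is broken, and D' t a = D t a otherwise, satisfies (D,D') ⊨ M. In particular, changed values can be chosen arbitrarily, one common value per broken component. -/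
/-- A connected component of the similarity graph `G_D` containing `p` is broken
if it contains two adjacent vertices carrying different values in `D`. -/
def Broken {T A U : Type*} (sim : A → A → U → U → Prop)
    (M : Finset (MD A)) (D : T → A → U) (p : T × A) : Prop :=
  ∃ q r : T × A, Relation.EqvGen (SimEdge sim M D) p q ∧
    SimEdge sim M D q r ∧ D q.1 q.2 ≠ D r.1 r.2

/-!
The modifiable positions are exactly the vertices of the broken components of the similarity graph:
an edge with different values at its ends makes both ends modifiable, and modifiability spreads
along edges. Hence `(D, D') ⊨ M` says that `D'` is constant along edges and agrees with `D` outside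
the broken components. Edges never leave a component, and on an unbroken component `D` is already
constant along edges.
-/

section SimilarityGraph

variable {T A U : Type*} {sim : A → A → U → U → Prop} {M : Finset (MD A)} {D D' : T → A → U}
  {p q : T × A}

theorem SimEdge.symm (h : SimEdge sim M D p q) : SimEdge sim M D q p :=
  let ⟨m, hm, hpq⟩ := h
  ⟨m, hm, hpq.symm⟩

theorem SimEdge.broken_of_ne (h : SimEdge sim M D p q) (hne : D p.1 p.2 ≠ D q.1 q.2) :
    Broken sim M D p :=
  ⟨p, q, .refl p, h, hne⟩

theorem SimEdge.modifiable_of_ne (h : SimEdge sim M D p q) (hne : D p.1 p.2 ≠ D q.1 q.2) :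
    Modifiable sim M D p.1 p.2 := by
  obtain ⟨m, hm, ⟨hsim, hR⟩ | ⟨hsim, hR⟩⟩ := h
  · exact .left_ne hm hR hsim hne
  · exact .right_ne hm hR hsim hne.symm

theorem SimEdge.modifiable (h : SimEdge sim M D p q) (hq : Modifiable sim M D q.1 q.2) :
    Modifiable sim M D p.1 p.2 := by
  obtain ⟨m, hm, ⟨hsim, hR⟩ | ⟨hsim, hR⟩⟩ := h
  · exact .left_mod hm hR hsim hq
  · exact .right_mod hm hR hsim hq

theorem modifiable_iff_of_eqvGen (h : Relation.EqvGen (SimEdge sim M D) p q) :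
    Modifiable sim M D p.1 p.2 ↔ Modifiable sim M D q.1 q.2 := by
  induction h with
  | rel _ _ h => exact ⟨h.symm.modifiable, h.modifiable⟩
  | refl => exact .rfl
  | symm _ _ _ ih => exact ih.symm
  | trans _ _ _ _ _ ih₁ ih₂ => exact ih₁.trans ih₂

theorem Broken.of_eqvGen (hp : Broken sim M D p) (h : Relation.EqvGen (SimEdge sim M D) p q) :
    Broken sim M D q :=
  let ⟨r, s, hpr, hrs, hne⟩ := hp
  ⟨r, s, (h.symm _ _).trans _ _ _ hpr, hrs, hne⟩

theorem SimEdge.broken_iff (h : SimEdge sim M D p q) : Broken sim M D p ↔ Broken sim M D q :=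
  ⟨fun hp => hp.of_eqvGen (.rel _ _ h), fun hq => hq.of_eqvGen (.rel _ _ h.symm)⟩

theorem modifiable_iff_broken {t : T} {a : A} :
    Modifiable sim M D t a ↔ Broken sim M D (t, a) := by
  constructor
  · intro h
    induction h with
    | @left_ne m t s c e hm hR hsim hne =>
      have edge : SimEdge sim M D (t, c) (s, e) := ⟨m, hm, .inl ⟨hsim, hR⟩⟩
      exact edge.broken_of_ne hne
    | @left_mod m t s c e hm hR hsim _ ih =>
      have edge : SimEdge sim M D (t, c) (s, e) := ⟨m, hm, .inl ⟨hsim, hR⟩⟩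
      exact edge.broken_iff.2 ih
    | @right_ne m t s c e hm hR hsim hne =>
      have edge : SimEdge sim M D (t, c) (s, e) := ⟨m, hm, .inr ⟨hsim, hR⟩⟩
      exact edge.broken_of_ne hne.symm
    | @right_mod m t s c e hm hR hsim _ ih =>
      have edge : SimEdge sim M D (t, c) (s, e) := ⟨m, hm, .inr ⟨hsim, hR⟩⟩
      exact edge.broken_iff.2 ih
  · rintro ⟨q, r, hq, hqr, hne⟩
    exact (modifiable_iff_of_eqvGen hq).2 (hqr.modifiable_of_ne hne)

theorem sat_iff_simEdge_broken :
    Sat sim M D D' ↔ (∀ p q, SimEdge sim M D p q → D' p.1 p.2 = D' q.1 q.2) ∧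
      ∀ t a, ¬ Broken sim M D (t, a) → D' t a = D t a := by
  simp only [Sat, modifiable_iff_broken]
  refine and_congr_left fun _ => ⟨fun hmatch p q hpq => ?_, fun hedge m hm t₁ t₂ hsim c hc => ?_⟩
  · obtain ⟨m, hm, ⟨hsim, hR⟩ | ⟨hsim, hR⟩⟩ := hpq
    · exact hmatch m hm _ _ hsim _ hR
    · exact (hmatch m hm _ _ hsim _ hR).symm
  · exact hedge (t₁, c.1) (t₂, c.2) ⟨m, hm, .inl ⟨hsim, hc⟩⟩

theorem sat_of_arbitrary_component_values_general (v : T × A → U)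
    (hv : ∀ p q, Broken sim M D p → Relation.EqvGen (SimEdge sim M D) p q → v p = v q)
    (hbr : ∀ t a, Broken sim M D (t, a) → D' t a = v (t, a))
    (hnbr : ∀ t a, ¬ Broken sim M D (t, a) → D' t a = D t a) :
    Sat sim M D D' := by
  refine sat_iff_simEdge_broken.2 ⟨fun p q hpq => ?_, hnbr⟩
  by_cases hp : Broken sim M D p
  · calc
      D' p.1 p.2 = v p := hbr _ _ hp
      _ = v q := hv p q hp (.rel _ _ hpq)
      _ = D' q.1 q.2 := (hbr _ _ (hpq.broken_iff.1 hp)).symm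
  · calc
      D' p.1 p.2 = D p.1 p.2 := hnbr _ _ hp
      _ = D q.1 q.2 := not_ne_iff.1 (mt hpq.broken_of_ne hp)
      _ = D' q.1 q.2 := (hnbr _ _ (mt hpq.broken_iff.2 hp)).symm

end SimilarityGraph

/-- Theorem 3.1 (second part): changed values can be chosen arbitrarily, one
common value per broken connected component of the similarity graph. -/
theorem sat_of_arbitrary_component_values {T A U : Type*} [Fintype T] [Fintype A]
    (sim : A → A → U → U → Prop)
    (hsym : ∀ (a b : A) (x y : U), sim a b x y → sim b a y x)
    (hsub : ∀ (a b : A) (x y : U), x = y → sim a b x y)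
    (M : Finset (MD A)) (D : T → A → U)
    (v : T × A → U)
    (hv : ∀ p q : T × A, Relation.EqvGen (SimEdge sim M D) p q → v p = v q)
    (D' : T → A → U)
    (hbr : ∀ (t : T) (a : A), Broken sim M D (t, a) → D' t a = v (t, a))
    (hnbr : ∀ (t : T) (a : A), ¬ Broken sim M D (t, a) → D' t a = D t a) :
    Sat sim M D D' :=
  sat_of_arbitrary_component_values_general v (fun p q _ hpq => hv p q hpq) hbr hnbr
end

section
/- If D is stable for M, i.e. (D,D) ⊨ M, then no pair (t,a) ∈ T × A is modifiable in D, and for every instance D' one has (D,D') ⊨ M if and only if D' = D; consequently D is the unique resolved instance of itself with respect to M. -/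
section Stable

variable {T A U : Type*} {sim : A → A → U → U → Prop} {M : Finset (MD A)} {D D' : T → A → U}

theorem Sat.not_modifiable (hstable : Sat sim M D D) (t : T) (a : A) :
    ¬ Modifiable sim M D t a := by
  intro h
  induction h with
  | left_ne hm hR hsim hne => exact hne (hstable.1 _ hm _ _ hsim _ hR)
  | left_mod _ _ _ _ ih => exact ih
  | right_ne hm hR hsim hne => exact hne (hstable.1 _ hm _ _ hsim _ hR)
  | right_mod _ _ _ _ ih => exact ih

theorem Sat.eq_of_forall_not_modifiable (h : Sat sim M D D')
    (hD : ∀ (t : T) (a : A), ¬ Modifiable sim M D t a) : D' = D :=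
  funext₂ fun t a => h.2 t a (hD t a)

theorem Sat.resolvedInstance (h : Sat sim M D D') (hstable : Sat sim M D' D') :
    ResolvedInstance sim M D D' :=
  ⟨[], List.isChain_pair.2 h, hstable⟩

theorem ResolvedInstance.eq_of_forall_sat_eq (h : ResolvedInstance sim M D D')
    (hD : ∀ E : T → A → U, Sat sim M D E → E = D) : D' = D := by
  obtain ⟨L, hchain, -⟩ := h
  refine hchain.cons_induction (· = D) _ ?_ rfl D' (by simp)
  rintro _ E hE rfl
  exact hD E hE

theorem stable_unique_resolved_general (hstable : Sat sim M D D) :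
    (∀ (t : T) (a : A), ¬ Modifiable sim M D t a) ∧
    (∀ D' : T → A → U, Sat sim M D D' ↔ D' = D) ∧
    (∀ D' : T → A → U, ResolvedInstance sim M D D' ↔ D' = D) := by
  have hfixed : ∀ E : T → A → U, Sat sim M D E → E = D :=
    fun _ h => h.eq_of_forall_not_modifiable hstable.not_modifiable
  refine ⟨hstable.not_modifiable, fun E => ⟨hfixed E, ?_⟩,
    fun E => ⟨fun h => h.eq_of_forall_sat_eq hfixed, ?_⟩⟩
  · rintro rfl
    exact hstable
  · rintro rfl
    exact hstable.resolvedInstance hstable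

end Stable

/-- If `D` is stable for `M`, then no value of `D` is modifiable,
`(D, D') ⊨ M` holds exactly for `D' = D`, and `D` is the unique resolved
instance of itself wrt `M`. -/
theorem stable_unique_resolved {T A U : Type*} [Fintype T] [Fintype A]
    (sim : A → A → U → U → Prop)
    (hsym : ∀ (a b : A) (x y : U), sim a b x y → sim b a y x)
    (hsub : ∀ (a b : A) (x y : U), x = y → sim a b x y)
    (M : Finset (MD A)) (D : T → A → U)
    (hstable : Sat sim M D D) :
    (∀ (t : T) (a : A), ¬ Modifiable sim M D t a) ∧
    (∀ D' : T → A → U, Sat sim M D D' ↔ D' = D) ∧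
    (∀ D' : T → A → U, ResolvedInstance sim M D D' ↔ D' = D) :=
  stable_unique_resolved_general hstable
end

section
/- Let the attribute set be A = {α, β}, let k ≥ 1 and let T have exactly 2k tuple identifiers t₀,…,t_{2k−1}. Let M = {m} where L(m) = {(α,α)} with a symmetric similarity relation ≈ subsuming equality, and R(m) = {(β,β)}. Suppose D satisfies: D tᵢ α ≈ D tⱼ α holds if and only if i = j or {i,j} = {2l, 2l+1} for some l < k; and D t_{2l} β ≠ D t_{2l+1} β for every l < k. Then D has exactly 2^k minimally resolved instances with respect to M. -/
/-!
A cell is modifiable only if its attribute occurs on the right-hand side of some MD. So if a single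
MD identifies the values of one attribute `β` under a similarity condition not involving `β`, the
similarity condition never changes along a resolution. When this condition cuts the tuples into
blocks, a resolved instance is constant in `β` on each block, and the number of `β`-values it
keeps is the sum over the blocks of the frequency of the chosen value. A minimally resolved
instance therefore amounts to an independent choice, in each block, of a most frequent original
value; a block of two distinct values offers exactly two choices.
-/

section RightHandAttributes

variable {T A U : Type*} {sim : A → A → U → U → Prop} {M : Finset (MD A)} {D D' : T → A → U}

theorem Modifiable.exists_mem_R {t : T} {c : A} (h : Modifiable sim M D t c) :
    ∃ m ∈ M, ∃ p ∈ m.R, p.1 = c ∨ p.2 = c := by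
  cases h with
  | left_ne hm hp | left_mod hm hp => exact ⟨_, hm, _, hp, Or.inl rfl⟩
  | right_ne hm hp | right_mod hm hp => exact ⟨_, hm, _, hp, Or.inr rfl⟩

theorem Sat.apply_eq_of_notMem_R {c : A} (hc : ∀ m ∈ M, ∀ p ∈ m.R, p.1 ≠ c ∧ p.2 ≠ c)
    (h : Sat sim M D D') (t : T) : D' t c = D t c := by
  refine h.2 t c fun hmod => ?_
  obtain ⟨m, hm, p, hp, hpc⟩ := hmod.exists_mem_R
  exact hpc.elim (hc m hm p hp).1 (hc m hm p hp).2

theorem ResolvedInstance.reflTransGen_sat (h : ResolvedInstance sim M D D') :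
    Relation.ReflTransGen (Sat sim M) D D' := by
  obtain ⟨l, hl, -⟩ := h
  exact List.relationReflTransGen_of_exists_isChain_cons _ hl (by simp)

theorem ResolvedInstance.apply_eq_of_notMem_R {c : A}
    (hc : ∀ m ∈ M, ∀ p ∈ m.R, p.1 ≠ c ∧ p.2 ≠ c) (h : ResolvedInstance sim M D D') (t : T) :
    D' t c = D t c := by
  replace h := h.reflTransGen_sat
  induction h with
  | refl => rfl
  | tail _ hstep ih => exact (hstep.apply_eq_of_notMem_R hc t).trans ih

theorem simPairs_congr {L : Finset (A × A)} {s t : T}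
    (h : ∀ p ∈ L, D s p.1 = D' s p.1 ∧ D t p.2 = D' t p.2) :
    simPairs sim L D s t ↔ simPairs sim L D' s t :=
  forall₂_congr fun p hp => by rw [(h p hp).1, (h p hp).2]

end RightHandAttributes

section BlockFrequency

variable {T ι U : Type*} {f : T → U} {π : T → ι} {i : ι} {u : U}

/-- The frequency of the value `u` of `f` in the block `π ⁻¹' {i}`, with value `0` when
`u` is attained infinitely often there. -/
noncomputable def blockFreq (f : T → U) (π : T → ι) (i : ι) (u : U) : ℕ :=
  {t | π t = i ∧ f t = u}.ncard

/-- `u` is a mode of the block `π ⁻¹' {i}`: no value of `f` is more frequent there. In an empty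
block every `u` qualifies. -/
def IsBlockMode (f : T → U) (π : T → ι) (i : ι) (u : U) : Prop :=
  ∀ w, blockFreq f π i w ≤ blockFreq f π i u

theorem sum_blockFreq [Finite T] [Fintype ι] (f : T → U) (π : T → ι) (v : ι → U) :
    ∑ i, blockFreq f π i (v i) = {t | f t = v (π t)}.ncard := by
  classical
  have := Fintype.ofFinite T
  simp only [blockFreq, Set.ncard_eq_toFinset_card', Set.toFinset_ofPred]
  rw [Finset.card_eq_sum_card_fiberwise (f := π) (t := Finset.univ) fun _ _ => Finset.mem_univ _]
  refine Finset.sum_congr rfl fun i _ => congrArg Finset.card ?_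
  ext t
  simp only [Finset.mem_filter, Finset.mem_univ, true_and]
  grind

variable [Finite T]

theorem blockFreq_pos_iff : 0 < blockFreq f π i u ↔ ∃ t, π t = i ∧ f t = u :=
  Set.ncard_pos

theorem IsBlockMode.exists_apply_eq (hu : IsBlockMode f π i u) (hi : (π ⁻¹' {i}).Nonempty) :
    ∃ t, π t = i ∧ f t = u := by
  obtain ⟨t, ht⟩ := hi
  exact blockFreq_pos_iff.1 ((blockFreq_pos_iff.2 ⟨t, ht, rfl⟩).trans_le (hu (f t)))

theorem exists_isBlockMode (f : T → U) (hi : (π ⁻¹' {i}).Nonempty) :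
    ∃ u, IsBlockMode f π i u := by
  obtain ⟨t, -, ht⟩ := (π ⁻¹' {i}).exists_max_image (fun t => blockFreq f π i (f t))
    (Set.toFinite _) hi
  refine ⟨f t, fun w => ?_⟩
  rcases (blockFreq f π i w).eq_zero_or_pos with hw | hw
  · exact hw ▸ Nat.zero_le _
  · obtain ⟨s, hs, rfl⟩ := blockFreq_pos_iff.1 hw
    exact ht s hs

theorem isBlockMode_iff_of_injOn (hi : (π ⁻¹' {i}).Nonempty) (hf : (π ⁻¹' {i}).InjOn f) :
    IsBlockMode f π i u ↔ u ∈ f '' (π ⁻¹' {i}) := by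
  refine ⟨fun hu => hu.exists_apply_eq hi, fun hu w => ?_⟩
  calc blockFreq f π i w
    _ ≤ 1 := (Set.ncard_le_one_iff (Set.toFinite _)).2
      fun hs ht => hf hs.1 ht.1 (hs.2.trans ht.2.symm)
    _ ≤ blockFreq f π i u := blockFreq_pos_iff.2 hu

theorem card_isBlockMode_of_injOn (hi : (π ⁻¹' {i}).Nonempty) (hf : (π ⁻¹' {i}).InjOn f) :
    Nat.card {u // IsBlockMode f π i u} = (π ⁻¹' {i}).ncard := by
  simp only [isBlockMode_iff_of_injOn hi hf]
  exact hf.ncard_image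

end BlockFrequency

section MergeBlocks

variable {T A U ι : Type*} [DecidableEq A]

/-- The instance obtained from `D` by giving `β` the common value `v i` on each block
`π ⁻¹' {i}`. -/
def mergeBlocks (D : T → A → U) (β : A) (π : T → ι) (v : ι → U) : T → A → U :=
  fun t => Function.update (D t) β (v (π t))

variable {D : T → A → U} {β : A} {π : T → ι} {v : ι → U}

@[simp]
theorem mergeBlocks_apply_self (t : T) : mergeBlocks D β π v t β = v (π t) :=
  Function.update_self ..

theorem mergeBlocks_apply_of_ne {a : A} (h : a ≠ β) (t : T) : mergeBlocks D β π v t a = D t a :=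
  Function.update_of_ne h ..

theorem mergeBlocks_injective (hπ : Function.Surjective π) :
    Function.Injective (mergeBlocks D β π) := by
  intro v w h
  refine hπ.injective_comp_right (funext fun t => ?_)
  simpa using congrFun (congrFun h t) β

theorem numChanges_mergeBlocks :
    numChanges D (mergeBlocks D β π v) = {t | D t β ≠ v (π t)}.ncard := by
  have changed_iff (t : T) (a : A) :
      D t a ≠ mergeBlocks D β π v t a ↔ a = β ∧ D t β ≠ v (π t) := by
    by_cases h : a = β
    · subst h; simp
    · simp [h, mergeBlocks_apply_of_ne]
  have image_eq : {p : T × A | D p.1 p.2 ≠ mergeBlocks D β π v p.1 p.2} =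
      (·, β) '' {t | D t β ≠ v (π t)} := by
    ext ⟨t, a⟩
    simp [changed_iff, and_comm, eq_comm]
  exact (congrArg Set.ncard image_eq).trans
    (Set.ncard_image_of_injective _ (Prod.mk_left_injective β))

theorem numChanges_mergeBlocks_add_sum_blockFreq [Finite T] [Fintype ι] (v : ι → U) :
    numChanges D (mergeBlocks D β π v) + ∑ i, blockFreq (D · β) π i (v i) = Nat.card T := by
  rw [numChanges_mergeBlocks, sum_blockFreq, add_comm]
  exact Set.ncard_add_ncard_compl _

end MergeBlocks

/-- The MD which identifies the `β`-values of tuples satisfying the similarity condition `L`. -/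
abbrev mergeMD {A : Type*} (L : Finset (A × A)) (β : A) : MD A := ⟨L, {(β, β)}⟩

section SingleMerge

variable {T A U ι : Type*} {sim : A → A → U → U → Prop} {L : Finset (A × A)} {β : A}
  {D D' : T → A → U} {π : T → ι}

theorem sat_singleton_mergeMD_iff : Sat sim {mergeMD L β} D D' ↔
    (∀ s t, simPairs sim L D s t → D' s β = D' t β) ∧
      ∀ t a, ¬ Modifiable sim {mergeMD L β} D t a → D' t a = D t a := by
  simp only [Sat, Finset.mem_singleton, forall_eq]

theorem ResolvedInstance.apply_eq_of_ne {a : A} (ha : a ≠ β)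
    (h : ResolvedInstance sim {mergeMD L β} D D') (t : T) : D' t a = D t a :=
  h.apply_eq_of_notMem_R (by simp [ha.symm]) t

theorem ResolvedInstance.apply_eq_of_simPairs (hL : ∀ p ∈ L, p.1 ≠ β ∧ p.2 ≠ β)
    (h : ResolvedInstance sim {mergeMD L β} D D') {s t : T} (hst : simPairs sim L D s t) :
    D' s β = D' t β := by
  have sim_iff : simPairs sim L D' s t ↔ simPairs sim L D s t := simPairs_congr fun p hp =>
    ⟨h.apply_eq_of_ne (hL p hp).1 s, h.apply_eq_of_ne (hL p hp).2 t⟩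
  obtain ⟨-, -, hstable⟩ := h
  exact (sat_singleton_mergeMD_iff.1 hstable).1 s t (sim_iff.2 hst)

theorem ResolvedInstance.exists_mergeBlocks_eq [DecidableEq A] (hπ : Function.Surjective π)
    (hL : ∀ p ∈ L, p.1 ≠ β ∧ p.2 ≠ β) (hsim : ∀ s t, π s = π t → simPairs sim L D s t)
    (h : ResolvedInstance sim {mergeMD L β} D D') : ∃ v, mergeBlocks D β π v = D' := by
  refine ⟨fun i => D' (Function.surjInv hπ i) β, funext₂ fun t a => ?_⟩
  by_cases ha : a = β
  · subst ha
    rw [mergeBlocks_apply_self]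
    exact h.apply_eq_of_simPairs hL (hsim _ _ (Function.surjInv_eq hπ _))
  · rw [mergeBlocks_apply_of_ne ha, h.apply_eq_of_ne ha]

theorem resolvedInstance_mergeBlocks [DecidableEq A] (hL : ∀ p ∈ L, p.1 ≠ β ∧ p.2 ≠ β)
    (hsim : ∀ s t, simPairs sim L D s t ↔ π s = π t) {v : ι → U}
    (hv : ∀ t, ∃ s, π s = π t ∧ D s β = v (π t)) :
    ResolvedInstance sim {mergeMD L β} D (mergeBlocks D β π v) := by
  have merged {s t : T} (hst : simPairs sim L D s t) :
      mergeBlocks D β π v s β = mergeBlocks D β π v t β := by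
    simp only [mergeBlocks_apply_self, (hsim s t).1 hst]
  have sim_iff (s t : T) : simPairs sim L (mergeBlocks D β π v) s t ↔ simPairs sim L D s t :=
    simPairs_congr fun p hp =>
      ⟨mergeBlocks_apply_of_ne (hL p hp).1 s, mergeBlocks_apply_of_ne (hL p hp).2 t⟩
  have unmodifiable {t : T} {a : A} (hta : ¬ Modifiable sim {mergeMD L β} D t a) :
      mergeBlocks D β π v t a = D t a := by
    by_cases ha : a = β
    · subst ha
      obtain ⟨s, hst, hs⟩ := hv t
      rw [mergeBlocks_apply_self, ← hs]
      by_contra hne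
      exact hta (.left_ne (Finset.mem_singleton_self _) (Finset.mem_singleton_self _)
        ((hsim t s).2 hst.symm) (Ne.symm hne))
    · exact mergeBlocks_apply_of_ne ha t
  have step : Sat sim {mergeMD L β} D (mergeBlocks D β π v) :=
    sat_singleton_mergeMD_iff.2 ⟨fun _ _ => merged, fun _ _ => unmodifiable⟩
  have stable : Sat sim {mergeMD L β} (mergeBlocks D β π v) (mergeBlocks D β π v) :=
    sat_singleton_mergeMD_iff.2 ⟨fun s t hst => merged ((sim_iff s t).1 hst), fun _ _ _ => rfl⟩
  exact ⟨[], List.isChain_pair.2 step, stable⟩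

theorem isMRI_iff_exists_isBlockMode [DecidableEq A] [Finite T]
    (hπ : Function.Surjective π) (hL : ∀ p ∈ L, p.1 ≠ β ∧ p.2 ≠ β)
    (hsim : ∀ s t, simPairs sim L D s t ↔ π s = π t) :
    IsMRI sim {mergeMD L β} D D' ↔
      ∃ v, (∀ i, IsBlockMode (D · β) π i (v i)) ∧ mergeBlocks D β π v = D' := by
  have := Finite.of_surjective π hπ
  have := Fintype.ofFinite ι
  have modal_resolved {v : ι → U} (hv : ∀ i, IsBlockMode (D · β) π i (v i)) :
      ResolvedInstance sim {mergeMD L β} D (mergeBlocks D β π v) :=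
    resolvedInstance_mergeBlocks hL hsim fun t => (hv (π t)).exists_apply_eq ⟨t, rfl⟩
  have resolved_merge {E : T → A → U} (hE : ResolvedInstance sim {mergeMD L β} D E) :=
    hE.exists_mergeBlocks_eq hπ hL fun s t => (hsim s t).2
  have numChanges_le_iff (v w : ι → U) :
      numChanges D (mergeBlocks D β π v) ≤ numChanges D (mergeBlocks D β π w) ↔
        ∑ i, blockFreq (D · β) π i (w i) ≤ ∑ i, blockFreq (D · β) π i (v i) := by
    have := numChanges_mergeBlocks_add_sum_blockFreq (D := D) (β := β) (π := π) v
    have := numChanges_mergeBlocks_add_sum_blockFreq (D := D) (β := β) (π := π) w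
    lia
  constructor
  · rintro ⟨hres, hmin⟩
    obtain ⟨v, rfl⟩ := resolved_merge hres
    choose w hw using fun i => exists_isBlockMode (D · β) (hπ i)
    have freq_le (i : ι) : blockFreq (D · β) π i (v i) ≤ blockFreq (D · β) π i (w i) := hw i (v i)
    have sum_le := (numChanges_le_iff v w).1 (hmin _ (modal_resolved hw))
    have freq_eq := (Finset.sum_eq_sum_iff_of_le fun i _ => freq_le i).1
      ((Finset.sum_le_sum fun i _ => freq_le i).antisymm sum_le)
    exact ⟨v, fun i u => (hw i u).trans_eq (freq_eq i (Finset.mem_univ i)).symm, rfl⟩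
  · rintro ⟨v, hv, rfl⟩
    refine ⟨modal_resolved hv, fun E hE => ?_⟩
    obtain ⟨w, rfl⟩ := resolved_merge hE
    exact (numChanges_le_iff v w).2 (Finset.sum_le_sum fun i _ => hv i (w i))

theorem card_isMRI_eq_prod_card_isBlockMode [Finite T] [Fintype ι] (hπ : Function.Surjective π)
    (hL : ∀ p ∈ L, p.1 ≠ β ∧ p.2 ≠ β) (hsim : ∀ s t, simPairs sim L D s t ↔ π s = π t) :
    Nat.card {D' // IsMRI sim {mergeMD L β} D D'} =
      ∏ i, Nat.card {u // IsBlockMode (D · β) π i u} := by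
  classical
  let merge (v : ∀ i, {u // IsBlockMode (D · β) π i u}) : {D' // IsMRI sim {mergeMD L β} D D'} :=
    ⟨mergeBlocks D β π fun i => v i,
      (isMRI_iff_exists_isBlockMode hπ hL hsim).2 ⟨_, fun i => (v i).2, rfl⟩⟩
  have merge_bijective : Function.Bijective merge := by
    constructor
    · intro v w h
      have values_eq : (fun i => (v i).1) = fun i => (w i).1 :=
        mergeBlocks_injective hπ (Subtype.ext_iff.1 h)
      exact funext fun i => Subtype.ext (congrFun values_eq i)
    · rintro ⟨D', hD'⟩
      obtain ⟨v, hv, rfl⟩ := (isMRI_iff_exists_isBlockMode hπ hL hsim).1 hD'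
      exact ⟨fun i => ⟨v i, hv i⟩, rfl⟩
  rw [← Nat.card_pi, Nat.card_eq_of_bijective merge merge_bijective]

end SingleMerge

theorem card_mri_eq_two_pow_general {T A U ι : Type*} [Finite T] {sim : A → A → U → U → Prop}
    {L : Finset (A × A)} {β : A} {D : T → A → U} {π : T → ι} (hL : ∀ p ∈ L, p.1 ≠ β ∧ p.2 ≠ β)
    (hsim : ∀ s t, simPairs sim L D s t ↔ π s = π t)
    (hpair : ∀ i, ∃ s t, π ⁻¹' {i} = {s, t} ∧ D s β ≠ D t β) :
    Nat.card {D' // IsMRI sim {mergeMD L β} D D'} = 2 ^ Nat.card ι := by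
  have nonempty (i : ι) : (π ⁻¹' {i}).Nonempty := by
    obtain ⟨s, t, hst, -⟩ := hpair i
    exact hst ▸ Set.insert_nonempty s {t}
  have := Finite.of_surjective π nonempty
  have := Fintype.ofFinite ι
  have card_modes (i : ι) : Nat.card {u // IsBlockMode (D · β) π i u} = 2 := by
    obtain ⟨s, t, hst, hne⟩ := hpair i
    rw [card_isBlockMode_of_injOn (nonempty i) (hst ▸ Set.injOn_pair.2 fun h => absurd h hne), hst,
      Set.ncard_pair (ne_of_apply_ne (D · β) hne)]
  rw [card_isMRI_eq_prod_card_isBlockMode nonempty hL hsim]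
  simp only [card_modes, Finset.prod_const, Finset.card_univ, Nat.card_eq_fintype_card]

section PairIndex

variable {k : ℕ}

/-- The index `l` of the pair `{2l, 2l + 1}` containing `i`. -/
def pairIndex (i : Fin (2 * k)) : Fin k := ⟨i / 2, by lia⟩

theorem pairIndex_eq_pairIndex_iff (i j : Fin (2 * k)) :
    pairIndex i = pairIndex j ↔ i = j ∨ ∃ l : ℕ, l < k ∧
      ((i.val = 2 * l ∧ j.val = 2 * l + 1) ∨ (i.val = 2 * l + 1 ∧ j.val = 2 * l)) := by
  simp only [pairIndex, Fin.ext_iff]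
  constructor
  · intro h
    by_cases hij : i.val = j.val
    · exact Or.inl hij
    · exact Or.inr ⟨i / 2, by lia⟩
  · rintro (h | ⟨l, -, h⟩) <;> lia

theorem pairIndex_preimage_singleton (l : Fin k) :
    pairIndex ⁻¹' {l} = {⟨2 * l, by lia⟩, ⟨2 * l + 1, by lia⟩} := by
  ext i
  simp only [pairIndex, Set.mem_preimage, Set.mem_singleton_iff, Set.mem_insert_iff, Fin.ext_iff]
  lia

end PairIndex

/-- Example 4.4: with attributes `α = 0`, `β = 1`, the single MD
`R[α] ≈ R[α] → R[β] ≐ R[β]`, `2k` tuples whose `α`-values are similar exactly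
within the pairs `{2l, 2l+1}` and whose `β`-values differ within each pair,
there are exactly `2^k` minimally resolved instances. -/
theorem card_mri_eq_two_pow {U : Type*} (k : ℕ) (hk : 1 ≤ k)
    (sim : Fin 2 → Fin 2 → U → U → Prop)
    (hsym : ∀ (a b : Fin 2) (x y : U), sim a b x y → sim b a y x)
    (hsub : ∀ (a b : Fin 2) (x y : U), x = y → sim a b x y)
    (D : Fin (2 * k) → Fin 2 → U)
    (hA : ∀ i j : Fin (2 * k), sim 0 0 (D i 0) (D j 0) ↔
      (i = j ∨ ∃ l : ℕ, l < k ∧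
        ((i.val = 2 * l ∧ j.val = 2 * l + 1) ∨ (i.val = 2 * l + 1 ∧ j.val = 2 * l))))
    (hB : ∀ (l : ℕ) (h : l < k),
      D ⟨2 * l, by omega⟩ 1 ≠ D ⟨2 * l + 1, by omega⟩ 1) :
    Nat.card {D' : Fin (2 * k) → Fin 2 → U //
      IsMRI sim
        ({⟨({((0 : Fin 2), (0 : Fin 2))} : Finset (Fin 2 × Fin 2)),
           ({((1 : Fin 2), (1 : Fin 2))} : Finset (Fin 2 × Fin 2))⟩} :
          Finset (MD (Fin 2))) D D'} = 2 ^ k := by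
  have hsim (i j : Fin (2 * k)) : simPairs sim {(0, 0)} D i j ↔ pairIndex i = pairIndex j := by
    rw [pairIndex_eq_pairIndex_iff, ← hA]
    simp [simPairs]
  simpa using card_mri_eq_two_pow_general (β := 1) (by simp) hsim
    fun l => ⟨_, _, pairIndex_preimage_singleton l, hB l l.isLt⟩
end
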